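/- Finitely generated free groups are omnipotent: let F be a finitely generated free group and let g_1, …, g_r ∈ F be nontrivial elements that are pairwise independent, i.e. for all i ≠ j no nontrivial power of g_i is conjugate in F to a nontrivial power of g_j. Then there exists a positive integer d = d(g_1,…,g_r) such that for every r-tuple (n_1, …, n_r) of positive integers there exist a finite group Q and a surjective homomorphism q : F → Q such that the order of q(g_i) in Q is exactly d·n_i for each i = 1, …, r. -/

import Mathlib

/-- A cochain on the edges of the Cayley graph of `P` (with respect to `π ∘ b`) extends to a
cocycle, whose value `S x r` is the sum of the cochain along the path labelled `x` starting at `r`. -/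
theorem FreeGroupBasis.exists_cocycle {ι G P : Type*} [Group G] [Group P]
    (b : FreeGroupBasis ι G) (π : G →* P) (c : P → ι → ℤ) :
    ∃ S : G → P → ℤ, (∀ x y r, S (x * y) r = S x r + S y (r * π x)) ∧
      ∀ s r, S (b s) r = c r s := by
  let W : G →* RegularWreathProduct (Multiplicative ℤ) P :=
    b.lift fun s => ⟨fun q => Multiplicative.ofAdd (c q⁻¹ s), π (b s)⟩
  have hW : ∀ s, W (b s) = ⟨fun q => Multiplicative.ofAdd (c q⁻¹ s), π (b s)⟩ := by
    intro s; simp [W]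
  have hr : ∀ x, (W x).right = π x := by
    intro x
    have : (RegularWreathProduct.rightHom.comp W) = π := b.ext_hom _ _ fun s => by
      simp [hW, RegularWreathProduct.rightHom]
    exact DFunLike.congr_fun this x
  refine ⟨fun x r => ((W x).left r⁻¹).toAdd, fun x y r => ?_, fun s r => ?_⟩
  · simp [hr]
  · simp [hW]

section cocycle

variable {G P : Type*} [Group G] [Group P] {π : G →* P} {S : G → P → ℤ}

theorem cocycle_one (hS : ∀ x y r, S (x * y) r = S x r + S y (r * π x)) (r : P) :
    S 1 r = 0 := by
  simpa using hS 1 1 r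

theorem cocycle_inv (hS : ∀ x y r, S (x * y) r = S x r + S y (r * π x)) (x : G) (r : P) :
    S x⁻¹ r = - S x (r * (π x)⁻¹) := by
  have h := hS x⁻¹ x r
  rw [inv_mul_cancel, cocycle_one hS, map_inv] at h
  lia

theorem cocycle_conj (hS : ∀ x y r, S (x * y) r = S x r + S y (r * π x)) (f : G) {k : G}
    (hk : π k = 1) (r : P) : S (f * k * f⁻¹) r = S k (r * π f) := by
  rw [hS, hS, cocycle_inv hS]
  simp [hk]

theorem cocycle_pow_const (hS : ∀ x y r, S (x * y) r = S x r + S y (r * π x)) {h : G} {n : ℕ}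
    (hn : π h ^ n = 1) (r : P) : S (h ^ n) (r * π h) = S (h ^ n) r := by
  have h1 := hS h (h ^ n) r
  have h2 := hS (h ^ n) h r
  rw [← pow_succ', pow_succ, h2, map_pow, hn] at h1
  simp at h1
  lia

end cocycle

/-- If `ψ` kills `v`, then the kernel of `ψ` modulo a prime `p` not dividing `θ v` carries a
homomorphism that is nonzero at `v` and kills the `p`-th powers of all elements at which `ψ` is
nonzero modulo `p`. -/
theorem IsFreeGroup.exists_hom_ne_zero_of_cyclic_cover {K : Type*} [Group K] [IsFreeGroup K]
    (θ ψ : Additive K →+ ℤ) (p : ℕ) (hp : p.Prime) (v : K) (hψv : ψ (.ofMul v) = 0)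
    (hθv : ¬ (p : ℤ) ∣ θ (.ofMul v)) :
    ∃ (L : Subgroup K) (φ : K → ℤ), L.FiniteIndex ∧ (∀ x ∈ L, ∀ y ∈ L, φ (x * y) = φ x + φ y) ∧
      v ∈ L ∧ φ v ≠ 0 ∧ ∀ h, ¬ (p : ℤ) ∣ ψ (.ofMul h) → h ^ p ∈ L ∧ φ (h ^ p) = 0 := by
  classical
  have := Fact.mk hp
  let π : K →* Multiplicative (ZMod p) :=
    AddMonoidHom.toMultiplicativeRight ((Int.castAddHom (ZMod p)).comp ψ)
  have hπ : ∀ x, π x = Multiplicative.ofAdd ((ψ (.ofMul x) : ℤ) : ZMod p) := fun x => rfl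
  let b := IsFreeGroup.basis K
  obtain ⟨S, hS, hSb⟩ := b.exists_cocycle π
    (fun r s => if r = 1 then θ (.ofMul (b s)) else 0)
  have hsum : ∀ x, ∑ r, S x r = θ (.ofMul x) := by
    let T : K →* Multiplicative ℤ := MonoidHom.mk' (fun x => .ofAdd (∑ r, S x r)) (by
      intro x y
      rw [← ofAdd_add]
      congr 1
      simp only [hS, Finset.sum_add_distrib]
      congr 1
      exact Fintype.sum_equiv (Equiv.mulRight (π x)) _ _ fun r => rfl)
    have : T = AddMonoidHom.toMultiplicativeRight θ := b.ext_hom _ _ fun s =>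
      congrArg Multiplicative.ofAdd (show ∑ r, S (b s) r = θ (.ofMul (b s)) by simp [hSb])
    intro x
    exact congrArg Multiplicative.toAdd (DFunLike.congr_fun this x)
  have hv : ∃ r, S v r ≠ S v 1 := by
    by_contra! hc
    apply hθv
    rw [← hsum, Finset.sum_congr rfl fun r _ => hc r]
    simp
  obtain ⟨r₀, hr₀⟩ := hv
  refine ⟨π.ker, fun x => S x r₀ - S x 1, inferInstance, ?_, ?_, ?_, ?_⟩
  · intro x hx y hy
    rw [MonoidHom.mem_ker] at hx
    simp only [hS, hx, mul_one]
    ring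
  · simp [MonoidHom.mem_ker, hπ, hψv]
  · simpa [sub_eq_zero] using hr₀
  · intro h hh
    have hn : π h ^ p = 1 := by
      rw [hπ, ← ofAdd_nsmul]; simp
    refine ⟨by simp [MonoidHom.mem_ker, hn], ?_⟩
    have hne : π h ≠ 1 := by
      rw [hπ, Ne, ofAdd_eq_one, ZMod.intCast_zmod_eq_zero_iff_dvd]
      exact hh
    have hc : ∀ (k : ℕ) r, S (h ^ p) (r * π h ^ k) = S (h ^ p) r := by
      intro k
      induction k with
      | zero => simp
      | succ k ih => intro r; rw [pow_succ, ← mul_assoc, cocycle_pow_const hS hn, ih]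
    have hmem : r₀ ∈ Submonoid.powers (π h) := by
      apply mem_powers_of_prime_card (p := p) _ hne
      simp
    obtain ⟨k, hk⟩ := hmem
    have := hc k 1
    rw [one_mul, show π h ^ k = r₀ from hk] at this
    simp [this]

/-- Finitely many elements that are separated from `v` by homomorphisms killing `v` can be separated
from `v` simultaneously. -/
theorem exists_hom_apply_ne_zero {K : Type*} [AddGroup K] (v : K) (T : Finset K)
    (hT : ∀ h ∈ T, ∃ η : K →+ ℤ, η v = 0 ∧ η h ≠ 0) :
    ∃ ψ : K →+ ℤ, ψ v = 0 ∧ ∀ h ∈ T, ψ h ≠ 0 := by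
  classical
  induction T using Finset.induction with
  | empty => exact ⟨0, by simp⟩
  | insert a T ha ih =>
    obtain ⟨ψ, hψ, hψT⟩ := ih fun h hh => hT h (Finset.mem_insert_of_mem hh)
    obtain ⟨η, hη, hηa⟩ := hT a (Finset.mem_insert_self _ _)
    let N : ℤ := 1 + ∑ h ∈ insert a T, |ψ h|
    have hN : ∀ h ∈ insert a T, |ψ h| < N := fun h hh => by
      have := Finset.single_le_sum (f := fun h => |ψ h|) (fun i _ => abs_nonneg _) hh
      simp only [N]; lia
    have key : ∀ h ∈ insert a T, ψ h + N * η h = 0 → ψ h = 0 ∧ η h = 0 := by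
      intro h hh h0
      have : ψ h = 0 := Int.eq_zero_of_abs_lt_dvd (m := N) ⟨-η h, by linarith⟩ (hN h hh)
      refine ⟨this, ?_⟩
      have hN0 : N ≠ 0 := by have := hN h hh; have := abs_nonneg (ψ h); lia
      simpa [this, hN0] using h0
    refine ⟨ψ + N • η, by simp [hψ, hη], fun h hh h0 => ?_⟩
    have := key h hh (by simpa using h0)
    rcases Finset.mem_insert.1 hh with rfl | h'
    · exact hηa this.2
    · exact hψT h h' this.1

/-- A function `φ` that is additive on a finite-index subgroup `L` and nonzero at a power of `v`
yields normal subgroups of finite index in which the order of `v` is any prescribed multiple of a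
constant `D`, while the order of every element on whose conjugates `φ` vanishes divides `D`. -/
theorem exists_normal_of_partial_hom {F : Type*} [Group F] (L : Subgroup F) [L.FiniteIndex]
    (φ : F → ℤ) (hφ : ∀ x ∈ L, ∀ y ∈ L, φ (x * y) = φ x + φ y) (v : F) (m : ℕ)
    (hvm : v ^ m ∈ L) (hφv : φ (v ^ m) ≠ 0) :
    ∃ D : ℕ, 0 < D ∧ ∀ n : ℕ, 0 < n → ∃ C : Subgroup F, C.Normal ∧ C.FiniteIndex ∧
      (∀ l : ℕ, v ^ l ∈ C ↔ D * n ∣ l) ∧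
      ∀ h, (∀ f, ∃ k : ℕ, f * h ^ k * f⁻¹ ∈ L ∧ k ≠ 0 ∧ φ (f * h ^ k * f⁻¹) = 0) → h ^ D ∈ C := by
  have hφ1 : φ 1 = 0 := by simpa using hφ 1 L.one_mem 1 L.one_mem
  have hφpow : ∀ x ∈ L, ∀ k : ℕ, φ (x ^ k) = k * φ x := by
    intro x hx k
    induction k with
    | zero => simp [hφ1]
    | succ k ih => rw [pow_succ, hφ _ (L.pow_mem hx k) _ hx, ih]; push_cast; ring
  have hcore : ∀ x ∈ L.normalCore, ∀ f, f * x * f⁻¹ ∈ L := fun x hx f => hx f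
  let μ := orderOf (QuotientGroup.mk v : F ⧸ L.normalCore)
  have hμ : ∀ l, v ^ l ∈ L.normalCore ↔ μ ∣ l := fun l => by
    rw [orderOf_dvd_iff_pow_eq_one, ← QuotientGroup.mk_pow, QuotientGroup.eq_one_iff]
  have hμpos : 0 < μ := orderOf_pos _
  let D := L.normalCore.index
  have hD : 0 < D := Nat.pos_of_ne_zero Subgroup.FiniteIndex.index_ne_zero
  have hDmem : ∀ h, h ^ D ∈ L.normalCore := fun h => L.normalCore.pow_index_mem h
  obtain ⟨e, he⟩ : μ ∣ D := (hμ D).1 (hDmem v)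
  have hepos : 0 < e := Nat.pos_of_ne_zero (by rintro rfl; simp at he; lia)
  have hvμ : v ^ μ ∈ L.normalCore := (hμ μ).2 dvd_rfl
  obtain ⟨c, hc⟩ := (IsPrincipalIdealRing.principal
    (Ideal.span (Set.range fun f => φ (f * v ^ μ * f⁻¹)))).principal
  have hcdvd : ∀ s t : ℤ, (∀ f, t ∣ s * φ (f * v ^ μ * f⁻¹)) ↔ t ∣ s * c := by
    intro s t
    constructor
    · intro h
      have hcmem : c ∈ Ideal.span (Set.range fun f => φ (f * v ^ μ * f⁻¹)) :=
        hc ▸ Submodule.mem_span_singleton_self c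
      clear hc
      induction hcmem using Submodule.span_induction with
      | mem x hx => obtain ⟨f, rfl⟩ := hx; exact h f
      | zero => simp
      | add x y _ _ hx hy => rw [mul_add]; exact dvd_add hx hy
      | smul a x _ hx => rw [smul_eq_mul, mul_left_comm]; exact hx.mul_left a
    · intro h f
      have hf : φ (f * v ^ μ * f⁻¹) ∈ Ideal.span {c} := by
        rw [Ideal.span, ← hc]; exact Ideal.subset_span ⟨f, rfl⟩
      exact h.trans (mul_dvd_mul_left s (Ideal.mem_span_singleton.1 hf))
  have hc0 : c ≠ 0 := by
    rintro rfl
    have h0 := (hcdvd 1 0).2 (by simp) 1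
    simp only [one_mul, inv_one, mul_one, zero_dvd_iff] at h0
    have h1 := hφpow _ (L.normalCore_le hvμ) m
    rw [← pow_mul, mul_comm, pow_mul, hφpow _ hvm, h0] at h1
    simp [hφv, hμpos.ne'] at h1
  refine ⟨D, hD, fun n hn => ?_⟩
  let N : ℕ := c.natAbs * (e * n)
  have : NeZero N := ⟨by simp [N, hc0, hepos.ne', hn.ne']⟩
  let ρ : L →* Multiplicative (ZMod N) := MonoidHom.mk' (fun x => .ofAdd ((φ x : ℤ) : ZMod N))
    fun x y => by simp [hφ x x.2 y y.2, ofAdd_add]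
  let M : Subgroup F := ρ.ker.map L.subtype
  have hM : ∀ x, x ∈ M ↔ x ∈ L ∧ (N : ℤ) ∣ φ x := by
    intro x
    simp [M, ρ, MonoidHom.mem_ker, ZMod.intCast_zmod_eq_zero_iff_dvd, and_comm]
  have hMfin : M.FiniteIndex := by
    constructor
    rw [Subgroup.index_map_subtype]
    exact mul_ne_zero Subgroup.FiniteIndex.index_ne_zero Subgroup.FiniteIndex.index_ne_zero
  have hC : ∀ x, x ∈ M.normalCore ↔ x ∈ L.normalCore ∧ ∀ f, (N : ℤ) ∣ φ (f * x * f⁻¹) := by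
    intro x
    exact ⟨fun h => ⟨fun f => ((hM _).1 (h f)).1, fun f => ((hM _).1 (h f)).2⟩,
      fun h f => (hM _).2 ⟨h.1 f, h.2 f⟩⟩
  refine ⟨M.normalCore, inferInstance, inferInstance, fun l => ?_, fun h hh => ?_⟩
  · have key : ∀ l', v ^ (μ * l') ∈ M.normalCore ↔ e * n ∣ l' := by
      intro l'
      rw [hC, and_iff_right ((hμ _).2 (dvd_mul_right _ _))]
      have h1 : ∀ f, φ (f * v ^ (μ * l') * f⁻¹) = l' * φ (f * v ^ μ * f⁻¹) := fun f => by
        rw [← hφpow _ (hcore _ hvμ f), conj_pow, pow_mul]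
      simp_rw [h1]
      rw [hcdvd, mul_comm, ← Int.natAbs_dvd_natAbs, Int.natAbs_mul, Int.natAbs_natCast,
        Int.natAbs_natCast, Nat.mul_dvd_mul_iff_left (Int.natAbs_pos.2 hc0)]
    constructor
    · intro h
      obtain ⟨l', rfl⟩ := (hμ l).1 ((hC _).1 h).1
      rw [he, mul_assoc]
      exact mul_dvd_mul_left _ ((key l').1 h)
    · rintro ⟨t, rfl⟩
      rw [he, mul_assoc, mul_assoc, key]
      exact ⟨t, by ring⟩
  · refine (hC _).2 ⟨hDmem h, fun f => ?_⟩
    obtain ⟨k, hkL, hk0, hk⟩ := hh f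
    have h1 := hφpow _ (hcore _ (hDmem h) f) k
    rw [conj_pow, ← pow_mul, mul_comm D k, pow_mul, ← conj_pow, hφpow _ hkL, hk] at h1
    have : φ (f * h ^ D * f⁻¹) = 0 := by simpa [hk0] using h1
    simp [this]

namespace FreeGroup

variable {α : Type*}

/-- The formal inverse of a letter. -/
def letterInv (x : α × Bool) : α × Bool := (x.1, !x.2)

theorem mk_letterInv (x : α × Bool) : mk [letterInv x] = (mk [x])⁻¹ := by
  simp [letterInv, inv_mk, invRev]

/-- The product of the first `n` letters of an infinite word. -/
def pathTo (a : ℕ → α × Bool) : ℕ → FreeGroup α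
  | 0 => 1
  | n + 1 => pathTo a n * mk [a n]

theorem pathTo_add (a : ℕ → α × Bool) (i n : ℕ) :
    pathTo a (i + n) = pathTo a i * pathTo (fun k => a (i + k)) n := by
  induction n with
  | zero => simp [pathTo]
  | succ n ih => rw [← add_assoc, pathTo, ih, pathTo, mul_assoc]

/-- The infinite word `a` is the (cyclically reduced) periodic word of period `ℓ` labelling an axis
of `g`, and `t` is a translation of the axis of this word to an axis of `g`. -/
structure IsAxis (a : ℕ → α × Bool) (ℓ : ℕ) (t g : FreeGroup α) : Prop where
  pos : 0 < ℓ
  periodic : ∀ i, a (ℓ + i) = a i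
  reduced : ∀ i, a (i + 1) ≠ letterInv (a i)
  eq_conj : g = t * pathTo a ℓ * t⁻¹

namespace IsAxis

variable {a a' : ℕ → α × Bool} {ℓ ℓ' : ℕ} {t t' g h : FreeGroup α}

theorem conj (ha : IsAxis a ℓ t g) (f : FreeGroup α) : IsAxis a ℓ (f * t) (f * g * f⁻¹) :=
  ⟨ha.pos, ha.periodic, ha.reduced, by rw [ha.eq_conj]; group⟩

theorem apply_mul_add (ha : IsAxis a ℓ t g) (m n : ℕ) : a (m * ℓ + n) = a n := by
  induction m with
  | zero => simp
  | succ m ih => rw [Nat.succ_mul, add_comm _ ℓ, add_assoc, ha.periodic, ih]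

theorem pathTo_mul_add (ha : IsAxis a ℓ t g) (m n : ℕ) :
    pathTo a (m * ℓ + n) = pathTo a ℓ ^ m * pathTo a n := by
  induction m with
  | zero => simp
  | succ m ih =>
    rw [Nat.succ_mul, add_comm _ ℓ, add_assoc, pathTo_add, pow_succ', mul_assoc, ← ih]
    simp_rw [ha.periodic]

theorem pow_eq_conj (ha : IsAxis a ℓ t g) (m : ℕ) : g ^ m = t * pathTo a (m * ℓ) * t⁻¹ := by
  have := ha.pathTo_mul_add m 0
  rw [ha.eq_conj, conj_pow]
  simp_all [pathTo]

theorem isConj_pow_of_shift (ha : IsAxis a ℓ t g) (ha' : IsAxis a' ℓ' t' h) (i : ℕ)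
    (hi : ∀ n, a' n = a (i + n)) : IsConj (g ^ ℓ') (h ^ ℓ) := by
  have h1 := pathTo_add a i (ℓ' * ℓ)
  rw [← funext hi, add_comm i, ha.pathTo_mul_add, mul_comm ℓ'] at h1
  rw [ha'.pow_eq_conj, isConj_iff]
  refine ⟨t' * (pathTo a i)⁻¹ * t⁻¹, ?_⟩
  have h3 : pathTo a' (ℓ * ℓ') = (pathTo a i)⁻¹ * (pathTo a ℓ ^ ℓ' * pathTo a i) := by
    rw [h1]; group
  rw [h3, ha.eq_conj, conj_pow]
  group

end IsAxis

section edges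

variable {P : Type*} [Group P] [DecidableEq P] [DecidableEq α] (π : FreeGroup α →* P)

/-- The signed number of times that crossing the letter `x` starting from the vertex `q` of the
Cayley graph runs through the oriented edge `e`. -/
def crossing (e : P × (α × Bool)) (q : P) (x : α × Bool) : ℤ :=
  (if (q, x) = e then 1 else 0) - (if (q * π (mk [x]), letterInv x) = e then 1 else 0)

/-- The signed number of times that the first `N` letters of the infinite word `a`, read from the
vertex `q` of the Cayley graph, run through the oriented edge `e`. -/
def pathCrossing (e : P × (α × Bool)) (q : P) (a : ℕ → α × Bool) (N : ℕ) : ℤ :=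
  ∑ i ∈ Finset.range N, crossing π e (q * π (pathTo a i)) (a i)

/-- Signed crossings of an oriented edge of the Cayley graph define a homomorphism on `π.ker`. -/
theorem exists_edgeHom (e : P × (α × Bool)) :
    ∃ χ : Additive π.ker →+ ℤ, ∀ (a : ℕ → α × Bool) (N : ℕ) (t : FreeGroup α) (k : π.ker),
      (k : FreeGroup α) = t * pathTo a N * t⁻¹ →
        χ (.ofMul k) = pathCrossing π e (π t) a N := by
  obtain ⟨S, hS, hSof⟩ := (FreeGroupBasis.ofFreeGroup α).exists_cocycle π
    fun r s => crossing π e r (s, true)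
  have hletter : ∀ x r, S (mk [x]) r = crossing π e r x := by
    rintro ⟨s, b⟩ r
    have hs : ∀ r, S (mk [(s, true)]) r = crossing π e r (s, true) := hSof s
    cases b
    · have := mk_letterInv (s, true)
      simp only [letterInv, Bool.not_true] at this
      rw [this, cocycle_inv hS, hs]
      simp [crossing, -inv_mk, this, letterInv]
    · exact hs r
  have hpath : ∀ a N r, S (pathTo a N) r = pathCrossing π e r a N := by
    intro a N r
    induction N with
    | zero => simp [pathTo, pathCrossing, cocycle_one hS]
    | succ N ih => rw [pathTo, hS, ih, hletter, pathCrossing, pathCrossing, Finset.sum_range_succ]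
  refine ⟨AddMonoidHom.mk' (fun k => S (k.toMul : FreeGroup α) 1) fun x y => ?_, ?_⟩
  · have hx : π (x.toMul : FreeGroup α) = 1 := x.toMul.2
    simp [hS, hx]
  · intro a N t k hk
    have hk1 : π (pathTo a N) = 1 := by
      have : π k = 1 := k.2
      rw [hk] at this
      simpa [conj_eq_one_iff] using this
    simp [hk, cocycle_conj hS t hk1, hpath]

variable {π}
variable {a a' : ℕ → α × Bool} {N N' : ℕ} {q q' : P}

theorem exists_of_pathCrossing_pos {e : P × (α × Bool)} (h : 0 < pathCrossing π e q a N) :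
    ∃ i, e = (q * π (pathTo a i), a i) := by
  obtain ⟨i, -, hi⟩ := Finset.exists_lt_of_sum_lt (s := Finset.range N) (f := fun _ => (0 : ℤ))
    (by simpa [pathCrossing] using h)
  refine ⟨i, ?_⟩
  by_contra hne
  rw [crossing, if_neg (Ne.symm hne)] at hi
  split_ifs at hi <;> simp at hi

theorem pathCrossing_pos (hred : ∀ i, a (i + 1) ≠ letterInv (a i))
    (hsimple : ∀ i j, π (pathTo a i) = π (pathTo a j) → a i = a j) {j : ℕ} (hj : j < N) :
    0 < pathCrossing π (q * π (pathTo a j), a j) q a N := by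
  have hterm : ∀ i, crossing π (q * π (pathTo a j), a j) (q * π (pathTo a i)) (a i) =
      if (q * π (pathTo a i), a i) = (q * π (pathTo a j), a j) then 1 else 0 := by
    intro i
    rw [crossing, sub_eq_self, ite_eq_right_iff]
    intro h
    exfalso
    simp only [Prod.mk.injEq, mul_assoc, mul_right_inj, ← _root_.map_mul] at h
    have h1 := hsimple (i + 1) j h.1
    exact hred i (h1.trans h.2.symm)
  refine Finset.sum_pos' (fun i _ => ?_) ⟨j, Finset.mem_range.2 hj, ?_⟩
  · rw [hterm]; split_ifs <;> simp
  · rw [hterm]; simp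

theorem exists_shift_of_pathCrossing_pos (hN' : 0 < N')
    (hred' : ∀ i, a' (i + 1) ≠ letterInv (a' i))
    (hsimple : ∀ i j, π (pathTo a i) = π (pathTo a j) → a i = a j)
    (hsimple' : ∀ i j, π (pathTo a' i) = π (pathTo a' j) → a' i = a' j)
    (hper : ∀ i, a' (i + N') = a' i)
    (hper' : ∀ i, π (pathTo a' (i + N')) = π (pathTo a' i))
    (h : ∀ e, 0 < pathCrossing π e q' a' N' → 0 < pathCrossing π e q a N) :
    ∃ i, ∀ n, a' n = a (i + n) := by
  have hedge : ∀ n, ∃ k, (q' * π (pathTo a' n), a' n) = (q * π (pathTo a k), a k) := by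
    intro n
    have h1 : π (pathTo a' (n % N')) = π (pathTo a' n) :=
      Function.Periodic.map_mod_nat (f := fun n => π (pathTo a' n)) hper' n
    have h2 : a' (n % N') = a' n := Function.Periodic.map_mod_nat (f := a') hper n
    rw [← h1, ← h2]
    exact exists_of_pathCrossing_pos (h _ (pathCrossing_pos hred' hsimple' (Nat.mod_lt n hN')))
  obtain ⟨i, hi⟩ := hedge 0
  have key : ∀ n, q' * π (pathTo a' n) = q * π (pathTo a (i + n)) ∧ a' n = a (i + n) := by
    intro n
    induction n with
    | zero => simpa using hi
    | succ n ih =>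
      have h1 : q' * π (pathTo a' (n + 1)) = q * π (pathTo a (i + (n + 1))) := by
        rw [← add_assoc, pathTo, pathTo, _root_.map_mul, _root_.map_mul, ← mul_assoc,
          ← mul_assoc, ih.1, ih.2]
      obtain ⟨k, hk⟩ := hedge (n + 1)
      rw [Prod.mk.injEq, h1, mul_right_inj] at hk
      exact ⟨h1, hk.2.trans (hsimple _ _ hk.1).symm⟩
  exact ⟨i, fun n => (key n).2⟩

end edges

section separation

variable {P : Type*} [Group P] {π : FreeGroup α →* P}
variable {a : ℕ → α × Bool} {ℓ : ℕ} {t g : FreeGroup α}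

theorem IsAxis.exists_hom_ne_zero (ha : IsAxis a ℓ t g)
    (hsimple : ∀ i j, π (pathTo a i) = π (pathTo a j) → a i = a j)
    {m : ℕ} (hm : 0 < m) (hg : g ^ m ∈ π.ker) :
    ∃ χ : Additive π.ker →+ ℤ, χ (.ofMul ⟨g ^ m, hg⟩) ≠ 0 := by
  classical
  obtain ⟨χ, hχ⟩ := exists_edgeHom π (π t * π (pathTo a 0), a 0)
  refine ⟨χ, ?_⟩
  rw [hχ a (m * ℓ) t ⟨g ^ m, hg⟩ (ha.pow_eq_conj m)]
  exact (pathCrossing_pos ha.reduced hsimple (Nat.mul_pos hm ha.pos)).ne'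

theorem IsAxis.exists_shift {a' : ℕ → α × Bool} {ℓ' : ℕ} {t' h : FreeGroup α} [DecidableEq P]
    [DecidableEq α]
    (ha' : IsAxis a' ℓ' t' h)
    (hsimple : ∀ i j, π (pathTo a i) = π (pathTo a j) → a i = a j)
    (hsimple' : ∀ i j, π (pathTo a' i) = π (pathTo a' j) → a' i = a' j)
    {m : ℕ} (hm : 0 < m) (hh : h ^ m ∈ π.ker)
    (hpos : ∀ e, 0 < pathCrossing π e (π t') a' (m * ℓ') → 0 < pathCrossing π e (π t) a (m * ℓ)) :
    ∃ i, ∀ n, a' n = a (i + n) := by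
  refine exists_shift_of_pathCrossing_pos (Nat.mul_pos hm ha'.pos) ha'.reduced hsimple
    hsimple' (fun i => ?_) (fun i => ?_) hpos
  · rw [add_comm, ha'.apply_mul_add]
  · have h1 : π (pathTo a' ℓ') ^ m = 1 := by
      have h2 : π (h ^ m) = 1 := hh
      rw [ha'.eq_conj, conj_pow] at h2
      simpa [conj_eq_one_iff] using h2
    rw [add_comm, ha'.pathTo_mul_add, _root_.map_mul, map_pow, h1, one_mul]

/-- If the axes of `g` and `h` embed in the Cayley graph of `P` and no nontrivial powers of `g` and
`h` are conjugate, then their powers in `π.ker` are not proportional in homology. -/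
theorem IsAxis.exists_hom_eq_zero_ne_zero {a' a'' : ℕ → α × Bool} {ℓ' ℓ'' : ℕ}
    {t' t'' h : FreeGroup α}
    (ha : IsAxis a ℓ t g) (ha' : IsAxis a' ℓ' t' h) (ha'' : IsAxis a'' ℓ'' t'' h⁻¹)
    (hsimple : ∀ i j, π (pathTo a i) = π (pathTo a j) → a i = a j)
    (hsimple' : ∀ i j, π (pathTo a' i) = π (pathTo a' j) → a' i = a' j)
    (hsimple'' : ∀ i j, π (pathTo a'' i) = π (pathTo a'' j) → a'' i = a'' j)
    (hind : ∀ m n : ℤ, m ≠ 0 → n ≠ 0 → ¬ IsConj (g ^ m) (h ^ n))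
    {m : ℕ} (hm : 0 < m) (hg : g ^ m ∈ π.ker) (hh : h ^ m ∈ π.ker) :
    ∃ η : Additive π.ker →+ ℤ, η (.ofMul ⟨g ^ m, hg⟩) = 0 ∧ η (.ofMul ⟨h ^ m, hh⟩) ≠ 0 := by
  classical
  by_contra! hη
  choose χ hχ using exists_edgeHom π
  set v : π.ker := ⟨g ^ m, hg⟩
  set w : π.ker := ⟨h ^ m, hh⟩
  have hhinv : (h⁻¹) ^ m ∈ π.ker := by rw [inv_pow]; exact inv_mem hh
  have hv : ∀ e, χ e (.ofMul v) = pathCrossing π e (π t) a (m * ℓ) :=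
    fun e => hχ e _ _ _ _ (ha.pow_eq_conj m)
  have hw : ∀ e, χ e (.ofMul w) = pathCrossing π e (π t') a' (m * ℓ') :=
    fun e => hχ e _ _ _ _ (ha'.pow_eq_conj m)
  have hw' : ∀ e, - χ e (.ofMul w) = pathCrossing π e (π t'') a'' (m * ℓ'') := fun e => by
    rw [← map_neg, ← ofMul_inv]
    exact hχ e _ _ _ _ (by rw [← ha''.pow_eq_conj m]; simp [w])
  have hprop : ∀ e e', χ e (.ofMul v) * χ e' (.ofMul w) = χ e' (.ofMul v) * χ e (.ofMul w) := by
    intro e e'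
    have := hη (χ e (.ofMul v) • χ e' - χ e' (.ofMul v) • χ e) (by simp [mul_comm])
    simpa [sub_eq_zero] using this
  let e₀ := (π t * π (pathTo a 0), a 0)
  have he₀ : 0 < χ e₀ (.ofMul v) := by
    rw [hv]; exact pathCrossing_pos ha.reduced hsimple (Nat.mul_pos hm ha.pos)
  rcases lt_trichotomy (χ e₀ (.ofMul w)) 0 with hlt | heq | hgt
  · obtain ⟨i, hi⟩ := ha''.exists_shift hsimple hsimple'' hm hhinv fun e he => by
      rw [← hw'] at he
      rw [← hv]
      nlinarith [hprop e₀ e]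
    have := ha.isConj_pow_of_shift ha'' i hi
    refine hind ℓ'' (-ℓ) (by simpa using ha''.pos.ne') (by simpa using ha.pos.ne') ?_
    simpa using this
  · let e₁ := (π t' * π (pathTo a' 0), a' 0)
    have he₁ : 0 < χ e₁ (.ofMul w) := by
      rw [hw]; exact pathCrossing_pos ha'.reduced hsimple' (Nat.mul_pos hm ha'.pos)
    have := hprop e₀ e₁
    rw [heq, mul_zero] at this
    exact (mul_pos he₀ he₁).ne' this
  · obtain ⟨i, hi⟩ := ha'.exists_shift hsimple hsimple' hm hh fun e he => by
      rw [← hw] at he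
      rw [← hv]
      nlinarith [hprop e₀ e]
    have := ha.isConj_pow_of_shift ha' i hi
    refine hind ℓ' ℓ (by simpa using ha'.pos.ne') (by simpa using ha.pos.ne') ?_
    simpa using this

end separation

end FreeGroup

/-- A partial injection of a finite type extends to a permutation. -/
theorem Equiv.Perm.exists_extend_of_rel {X : Type*} [Finite X] (R : X → X → Prop)
    (hfun : ∀ x y y', R x y → R x y' → y = y') (hinj : ∀ x x' y, R x y → R x' y → x = x') :
    ∃ σ : Equiv.Perm X, ∀ x y, R x y → σ x = y := by
  classical
  cases nonempty_fintype X
  let f : X → X := fun x => if h : ∃ y, R x y then h.choose else x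
  have hf : ∀ x y, R x y → f x = y := fun x y h => by
    have h' : ∃ y, R x y := ⟨y, h⟩
    simp only [f, dif_pos h']
    exact hfun _ _ _ h'.choose_spec h
  obtain ⟨σ, hσ⟩ := Set.MapsTo.exists_equiv_extend_of_card_eq (t := Finset.univ) (α := X)
    (s := {x | ∃ y, R x y}) (f := f) (by simp) (by simp [Set.MapsTo]) (by
      rintro x ⟨y, hy⟩ x' ⟨y', hy'⟩ h
      rw [hf _ _ hy, hf _ _ hy'] at h
      exact hinj _ _ _ hy (h ▸ hy'))
  refine ⟨σ.trans (Equiv.subtypeUnivEquiv Finset.mem_univ), fun x y h => ?_⟩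
  simp [hσ x ⟨y, h⟩, hf x y h]

namespace FreeGroup

variable {α : Type*}

theorem exists_isAxis {g : FreeGroup α} (hg : g ≠ 1) : ∃ a ℓ t, IsAxis a ℓ t g := by
  classical
  set L := reduceCyclically g.toWord
  have hred : IsCyclicallyReduced L := reduceCyclically.isCyclicallyReduced (isReduced_toWord)
  have hconj := reduceCyclically.conj_conjugator_reduceCyclically g.toWord
  have hgL : g = mk (reduceCyclically.conjugator g.toWord) * mk L *
      (mk (reduceCyclically.conjugator g.toWord))⁻¹ := by
    rw [inv_mk, mul_mk, mul_mk, hconj, mk_toWord]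
  have hne : L ≠ [] := by
    intro h
    rw [h, ← one_eq_mk] at hgL
    apply hg
    rw [hgL]
    group
  have hpos : 0 < L.length := List.length_pos_iff.2 hne
  let a : ℕ → α × Bool := fun i => L[i % L.length]'(Nat.mod_lt _ hpos)
  have hlt : ∀ i (h : i < L.length), a i = L[i] := fun i h => by simp [a, Nat.mod_eq_of_lt h]
  have hpath : ∀ n, n ≤ L.length → pathTo a n = mk (L.take n) := by
    intro n hn
    induction n with
    | zero => simp [pathTo, one_eq_mk]
    | succ n ih =>
      rw [pathTo, ih (by lia), hlt n hn, mul_mk, List.take_concat_get' L n hn]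
  have hper : ∀ i, a (L.length + i) = a i := fun i => by simp [a]
  refine ⟨a, L.length, mk (reduceCyclically.conjugator g.toWord), hpos, hper, fun i => ?_, ?_⟩
  · have key : ∀ i < L.length, a (i + 1) ≠ letterInv (a i) := by
      intro i hi h
      have hdir : (a i).1 = (a (i + 1)).1 → (a i).2 = (a (i + 1)).2 := by
        by_cases hi' : i + 1 < L.length
        · rw [hlt i hi, hlt _ hi']
          exact List.isChain_iff_getElem.1 hred.1 i hi'
        · have hi1 : i + 1 = L.length := by lia
          refine hred.2 _ ?_ _ ?_
          · rw [List.getLast?_eq_getElem?, ← hi1]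
            simp [hlt i hi]
          · rw [List.head?_eq_getElem?, hi1, ← add_zero L.length, hper, hlt 0 hpos]
            simp
      rw [h] at hdir
      simp [letterInv] at hdir
    have h1 : a ((i % L.length) + 1) = a (i + 1) := by simp [a]
    have h2 : a (i % L.length) = a i := by simp [a]
    rw [← h1, ← h2]
    exact key _ (Nat.mod_lt _ hpos)
  · rw [hpath _ le_rfl, List.take_length]
    exact hgL

/-- The axis of `g` embeds, modulo its period, in some finite permutation representation. -/
theorem IsAxis.exists_perm {a : ℕ → α × Bool} {ℓ : ℕ} {t g : FreeGroup α} (ha : IsAxis a ℓ t g) :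
    ∃ ρ : FreeGroup α →* Equiv.Perm (ZMod ℓ),
      ∀ i j, ρ (pathTo a i) = ρ (pathTo a j) → a i = a j := by
  have : NeZero ℓ := ⟨ha.pos.ne'⟩
  have hcast : ∀ i j : ℕ, (i : ZMod ℓ) = j → a i = a j := by
    intro i j h
    have hmod := (ZMod.natCast_eq_natCast_iff' i j ℓ).1 h
    have hp : Function.Periodic a ℓ := fun i => by rw [add_comm, ha.periodic]
    rw [← hp.map_mod_nat i, ← hp.map_mod_nat j, hmod]
  have hno : ∀ (s : α) (i j : ℕ), a i = (s, true) → a j = (s, false) →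
      (i : ZMod ℓ) ≠ j + 1 ∧ (i + 1 : ZMod ℓ) ≠ j := by
    intro s i j hi hj
    refine ⟨fun h => ?_, fun h => ?_⟩
    · have := hcast i (j + 1) (by simpa using h)
      exact ha.reduced j (by rw [← this, hi, hj]; rfl)
    · have := hcast (i + 1) j (by simpa using h)
      exact ha.reduced i (by rw [this, hi, hj]; rfl)
  have hσ : ∀ s : α, ∃ σ : Equiv.Perm (ZMod ℓ), ∀ x y : ZMod ℓ,
      (∃ i : ℕ, a i = (s, true) ∧ x = i + 1 ∧ y = i ∨ a i = (s, false) ∧ x = i ∧ y = i + 1) →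
        σ x = y := by
    intro s
    apply Equiv.Perm.exists_extend_of_rel
    · rintro x y y' ⟨i, ⟨hi, rfl, rfl⟩ | ⟨hi, rfl, rfl⟩⟩ ⟨j, ⟨hj, h, rfl⟩ | ⟨hj, h, rfl⟩⟩
      · simpa using h
      · exact absurd h (hno s i j hi hj).2
      · exact absurd h.symm (hno s j i hj hi).2
      · rw [h]
    · rintro x x' y ⟨i, ⟨hi, rfl, rfl⟩ | ⟨hi, rfl, rfl⟩⟩ ⟨j, ⟨hj, rfl, h⟩ | ⟨hj, rfl, h⟩⟩
      · rw [h]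
      · exact absurd h (hno s i j hi hj).1
      · exact absurd h.symm (hno s j i hj hi).1
      · simpa using h
  choose σ hσ using hσ
  let ρ : FreeGroup α →* Equiv.Perm (ZMod ℓ) := lift σ
  have hstep : ∀ i : ℕ, ρ (FreeGroup.mk [a i]) ((i + 1 : ℕ) : ZMod ℓ) = i := by
    intro i
    rcases hi : a i with ⟨s, b⟩
    cases b
    · have := hσ s i (i + 1) ⟨i, Or.inr ⟨hi, rfl, rfl⟩⟩
      simp [ρ, lift_mk, Equiv.symm_apply_eq, this]
    · have := hσ s (i + 1) i ⟨i, Or.inl ⟨hi, rfl, rfl⟩⟩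
      simp [ρ, lift_mk, this]
  have hpath : ∀ i : ℕ, ρ (pathTo a i) (i : ZMod ℓ) = 0 := by
    intro i
    induction i with
    | zero => simp [pathTo]
    | succ i ih => rw [pathTo, _root_.map_mul, Equiv.Perm.mul_apply, hstep, ih]
  refine ⟨ρ, fun i j h => hcast i j ((ρ (pathTo a i)).injective ?_)⟩
  rw [hpath, h, hpath]

end FreeGroup

/-- Among independent elements, the order of one of them in finite quotients can be any multiple of
a constant `D` while the orders of the others divide `D`. -/
theorem FreeGroup.exists_normal_pow_mem_iff {α ι : Type*} [Finite ι] (g : ι → FreeGroup α)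
    (hg : ∀ i, g i ≠ 1)
    (hind : ∀ i j, i ≠ j → ∀ m n : ℤ, m ≠ 0 → n ≠ 0 → ¬ IsConj (g i ^ m) (g j ^ n)) (i : ι) :
    ∃ D : ℕ, 0 < D ∧ ∀ n : ℕ, 0 < n → ∃ C : Subgroup (FreeGroup α), C.Normal ∧ C.FiniteIndex ∧
      (∀ l : ℕ, g i ^ l ∈ C ↔ D * n ∣ l) ∧ ∀ j, j ≠ i → g j ^ D ∈ C := by
  classical
  cases nonempty_fintype ι
  choose a ℓ t ha using fun j => exists_isAxis (hg j)
  choose a' ℓ' t' ha' using fun j => exists_isAxis (inv_ne_one.2 (hg j))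
  choose ρ hρ using fun j => (ha j).exists_perm
  choose ρ' hρ' using fun j => (ha' j).exists_perm
  have (j : ι) : NeZero (ℓ j) := ⟨(ha j).pos.ne'⟩
  have (j : ι) : NeZero (ℓ' j) := ⟨(ha' j).pos.ne'⟩
  let π := (MonoidHom.pi ρ).prod (MonoidHom.pi ρ')
  have hsimple : ∀ j k l, π (pathTo (a j) k) = π (pathTo (a j) l) → a j k = a j l :=
    fun j k l h => hρ j k l (congrFun (congrArg Prod.fst h) j)
  have hsimple' : ∀ j k l, π (pathTo (a' j) k) = π (pathTo (a' j) l) → a' j k = a' j l :=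
    fun j k l h => hρ' j k l (congrFun (congrArg Prod.snd h) j)
  let m := π.ker.index
  have hm : 0 < m := Nat.pos_of_ne_zero Subgroup.FiniteIndex.index_ne_zero
  have hpow : ∀ x, x ^ m ∈ π.ker := fun x => π.ker.pow_index_mem x
  let v : π.ker := ⟨g i ^ m, hpow _⟩
  let w : FreeGroup α → ι → π.ker := fun f j => ⟨(f * g j * f⁻¹) ^ m, hpow _⟩
  obtain ⟨θ, hθ⟩ := (ha i).exists_hom_ne_zero (hsimple i) hm (hpow (g i))
  have := Fintype.ofFinite (FreeGroup α ⧸ π.ker)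
  let T : Finset (Additive π.ker) :=
    Finset.univ.image fun s : (FreeGroup α ⧸ π.ker) × {j // j ≠ i} => .ofMul (w s.1.out s.2)
  obtain ⟨ψ, hψv, hψT⟩ := exists_hom_apply_ne_zero (.ofMul v) T (by
    intro h hh
    obtain ⟨⟨q, j, hj⟩, -, rfl⟩ := Finset.mem_image.1 hh
    have hinv := (ha' j).conj q.out
    rw [← conj_inv] at hinv
    refine (ha i).exists_hom_eq_zero_ne_zero ((ha j).conj q.out) hinv (hsimple i) (hsimple j)
      (hsimple' j) (fun k n hk hn hc => hind i j hj.symm k n hk hn (hc.trans ?_)) hm _ _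
    rw [conj_zpow]
    exact (isConj_iff.2 ⟨q.out, rfl⟩).symm)
  have hψ : ∀ f j, j ≠ i → ∃ x ∈ T, ψ (.ofMul (w f j)) = ψ x := by
    intro f j hj
    let q : FreeGroup α ⧸ π.ker := f
    refine ⟨.ofMul (w q.out j), Finset.mem_image.2 ⟨⟨q, j, hj⟩, Finset.mem_univ _, rfl⟩, ?_⟩
    have hk : f * q.out⁻¹ ∈ π.ker := by
      rw [← QuotientGroup.eq_one_iff, QuotientGroup.mk_mul, QuotientGroup.mk_inv,
        QuotientGroup.out_eq', mul_inv_cancel]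
    have hw : w f j = ⟨_, hk⟩ * w q.out j * (⟨_, hk⟩ : π.ker)⁻¹ := by
      ext
      simp only [w, conj_pow, Subgroup.coe_mul, Subgroup.coe_inv]
      group
    rw [hw, ofMul_mul, ofMul_mul, ofMul_inv, map_add, map_add, map_neg]
    ring
  let Z : ℤ := θ (.ofMul v) * ∏ x ∈ T, ψ x
  have hZ : Z ≠ 0 := mul_ne_zero hθ (Finset.prod_ne_zero_iff.2 hψT)
  obtain ⟨p, hpZ, hp⟩ := Nat.exists_infinite_primes (Z.natAbs + 1)
  have hpZ' : ¬ (p : ℤ) ∣ Z := fun h => by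
    have := Nat.le_of_dvd (Int.natAbs_pos.2 hZ) (Int.natCast_dvd.1 h)
    lia
  obtain ⟨L, φ, hL, hφ, hvL, hφv, hφh⟩ := IsFreeGroup.exists_hom_ne_zero_of_cyclic_cover θ ψ p hp v
    hψv fun h => hpZ' (h.mul_right _)
  let φ' : FreeGroup α → ℤ := fun x => if hx : x ∈ π.ker then φ ⟨x, hx⟩ else 0
  have hφ' : ∀ x : π.ker, φ' x = φ x := fun x => dif_pos x.2
  have hLfin : (L.map π.ker.subtype).FiniteIndex := by
    constructor
    rw [Subgroup.index_map_subtype]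
    exact mul_ne_zero Subgroup.FiniteIndex.index_ne_zero Subgroup.FiniteIndex.index_ne_zero
  obtain ⟨D, hD, hDn⟩ := exists_normal_of_partial_hom (L.map π.ker.subtype) φ' (by
    rintro _ ⟨x, hx, rfl⟩ _ ⟨y, hy, rfl⟩
    simp only [Subgroup.coe_subtype, ← Subgroup.coe_mul, hφ', hφ x hx y hy]) (g i) m
    ⟨v, hvL, rfl⟩ (by rw [show g i ^ m = (v : FreeGroup α) from rfl, hφ']; exact hφv)
  refine ⟨D, hD, fun n hn => ?_⟩
  obtain ⟨C, hCn, hCf, hC, hCh⟩ := hDn n hn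
  refine ⟨C, hCn, hCf, hC, fun j hj => hCh _ fun f => ⟨m * p, ?_⟩⟩
  have hwp : f * g j ^ (m * p) * f⁻¹ = ((w f j ^ p : π.ker) : FreeGroup α) := by
    simp [w, conj_pow, pow_mul]
  obtain ⟨x, hxT, hx⟩ := hψ f j hj
  have := hφh (w f j) fun h => hpZ' ((hx ▸ h).trans
    ((Finset.dvd_prod_of_mem ψ hxT).mul_left _))
  rw [hwp]
  exact ⟨⟨_, this.1, rfl⟩, (Nat.mul_pos hm hp.pos).ne', by rw [hφ']; exact this.2⟩

/-- **Omnipotence of free groups** (Wise; Theorem 3.22): given pairwise independent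
nontrivial elements `g 0, …, g (r-1)` of a finitely generated free group `F` (no
nontrivial powers of distinct ones are conjugate), there is `d ≥ 1` such that for all
positive integers `n 0, …, n (r-1)` there is a finite quotient `q : F → Q` in which
`q (g i)` has order exactly `d * n i` for each `i`. -/
theorem free_groups_are_omnipotent
    (F : Type) [Group F] [IsFreeGroup F] (hF : Group.FG F)
    (r : ℕ) (g : Fin r → F) (hg : ∀ i, g i ≠ 1)
    (hind : ∀ i j : Fin r, i ≠ j → ∀ m n : ℤ, m ≠ 0 → n ≠ 0 →
      ¬IsConj (g i ^ m) (g j ^ n)) :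
    ∃ d : ℕ, 0 < d ∧ ∀ n : Fin r → ℕ, (∀ i, 0 < n i) →
      ∃ (Q : Type) (_ : Group Q) (q : F →* Q), Finite Q ∧ Function.Surjective q ∧
        ∀ i, orderOf (q (g i)) = d * n i := by
  let e := IsFreeGroup.toFreeGroup F
  choose D hD hDn using FreeGroup.exists_normal_pow_mem_iff (fun i => e (g i))
    (fun i => by simpa using hg i) (fun i j hij m n hm hn hc => hind i j hij m n hm hn (by
      simpa [← map_zpow] using e.symm.toMonoidHom.map_isConj hc))
  choose c hc using fun i => Finset.dvd_prod_of_mem D (Finset.mem_univ i)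
  have hd : 0 < ∏ i, D i := Finset.prod_pos fun i _ => hD i
  refine ⟨∏ i, D i, hd, fun n hn => ?_⟩
  choose C hCn hCf hC hCj using fun i => hDn i (c i * n i)
    (Nat.mul_pos (Nat.pos_of_mul_pos_left (hc i ▸ hd)) (hn i))
  have hnorm : (⨅ i, C i).Normal := Subgroup.normal_iInf_normal hCn
  have hfin : (⨅ i, C i).FiniteIndex := Subgroup.finiteIndex_iInf hCf
  refine ⟨_ ⧸ ⨅ i, C i, inferInstance, (QuotientGroup.mk' _).comp e.toMonoidHom,
    inferInstance, (QuotientGroup.mk'_surjective _).comp e.surjective, fun i => ?_⟩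
  refine Nat.dvd_left_injective (funext fun l => propext ?_)
  have hdi : (∏ i, D i) * n i = D i * (c i * n i) := by rw [hc i, mul_assoc]
  beta_reduce
  rw [orderOf_dvd_iff_pow_eq_one, hdi, ← hC i l, ← map_pow]
  change QuotientGroup.mk (e (g i ^ l)) = 1 ↔ _
  rw [QuotientGroup.eq_one_iff, Subgroup.mem_iInf, map_pow]
  refine ⟨fun h => h i, fun h k => ?_⟩
  by_cases hk : i = k
  · exact hk ▸ h
  · obtain ⟨s, rfl⟩ : D k ∣ l := ((Dvd.intro _ (hc k).symm).mul_right (n i)).trans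
      (hdi ▸ (hC i l).1 h)
    rw [pow_mul]
    exact pow_mem (hCj k i hk) s
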